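/- arXiv:1202.6578 — 2 statements merged into one kernel-verified Lean document; each statement's English description precedes it below -/
import Mathlib

section
/- Standard Newtonian simultaneity, the relation (x̄, t) ∼ (ȳ, s) ⟺ t = s on ℝ³ × ℝ, is the only nontrivial 𝒢-invariant equivalence relation all of whose equivalence classes are connected subsets of ℝ³ × ℝ; it is also the only nontrivial C𝒢-invariant equivalence relation on ℝ³ × ℝ. -/
/-- A 3×3 real matrix is in SO(3) iff it is orthogonal with determinant 1. -/
def IsSO3 (S : Matrix (Fin 3) (Fin 3) ℝ) : Prop :=
  S.transpose * S = 1 ∧ S.det = 1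

/-- Invariance under the Galilei group `𝒢`: the group of maps
`(x̄, t) ↦ (S x̄ + t w̄ + b̄, t + b⁴)` with `S ∈ SO(3)`, `w̄ ∈ ℝ³`. -/
def IsGalileiInvariant (r : ((Fin 3 → ℝ) × ℝ) → ((Fin 3 → ℝ) × ℝ) → Prop) : Prop :=
  ∀ S : Matrix (Fin 3) (Fin 3) ℝ, IsSO3 S → ∀ w : Fin 3 → ℝ,
    ∀ b : (Fin 3 → ℝ) × ℝ, ∀ p q : (Fin 3 → ℝ) × ℝ, r p q →
      r (S.mulVec p.1 + p.2 • w + b.1, p.2 + b.2)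
        (S.mulVec q.1 + q.2 • w + b.1, q.2 + b.2)

/-- Invariance under the conformal Galilei group `C𝒢`: the group of maps
`(x̄, t) ↦ (λ S x̄ + t w̄ + b̄, λ t + b⁴)` with `λ > 0`, `S ∈ SO(3)`, `w̄ ∈ ℝ³`. -/
def IsConformalGalileiInvariant
    (r : ((Fin 3 → ℝ) × ℝ) → ((Fin 3 → ℝ) × ℝ) → Prop) : Prop :=
  ∀ l : ℝ, 0 < l → ∀ S : Matrix (Fin 3) (Fin 3) ℝ, IsSO3 S → ∀ w : Fin 3 → ℝ,
    ∀ b : (Fin 3 → ℝ) × ℝ, ∀ p q : (Fin 3 → ℝ) × ℝ, r p q →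
      r (l • S.mulVec p.1 + p.2 • w + b.1, l * p.2 + b.2)
        (l • S.mulVec q.1 + q.2 • w + b.1, l * q.2 + b.2)

/-- Standard Newtonian simultaneity `(x̄, t) ∼ (ȳ, s) ↔ t = s`. -/
def NewtonSim (p q : (Fin 3 → ℝ) × ℝ) : Prop := p.2 = q.2

/-- A relation on `ℝ³ × ℝ` is nontrivial if it is neither the total relation nor the
identity relation. -/
def IsNontrivialRel (r : ((Fin 3 → ℝ) × ℝ) → ((Fin 3 → ℝ) × ℝ) → Prop) : Prop :=
  (¬ ∀ p q : (Fin 3 → ℝ) × ℝ, r p q) ∧ (¬ ∀ p q : (Fin 3 → ℝ) × ℝ, r p q → p = q)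

theorem isSO3_one : IsSO3 1 := by simp [IsSO3]

theorem isSO3_rot (x y : ℝ) (h : x ^ 2 + y ^ 2 = 1) :
    IsSO3 !![x, -y, 0; y, x, 0; 0, 0, 1] := by
  constructor
  · ext i j
    fin_cases i <;> fin_cases j <;>
      simp [Matrix.mul_apply, Fin.sum_univ_three] <;> nlinarith
  · simp [Matrix.det_fin_three]; nlinarith

theorem isSO3_cyc : IsSO3 !![0, 1, 0; 0, 0, 1; 1, 0, 0] := by
  constructor
  · ext i j
    fin_cases i <;> fin_cases j <;>
      simp [Matrix.mul_apply, Fin.sum_univ_three]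
  · simp [Matrix.det_fin_three]

theorem isSO3_diag : IsSO3 !![1, 0, 0; 0, -1, 0; 0, 0, -1] := by
  constructor
  · ext i j
    fin_cases i <;> fin_cases j <;>
      simp [Matrix.mul_apply, Fin.sum_univ_three]
  · simp [Matrix.det_fin_three]

/-- A rotation-invariant nonzero additive subgroup of `ℝ³` is everything. -/
theorem rot_subgroup_top (V : AddSubgroup (Fin 3 → ℝ))
    (hS : ∀ S, IsSO3 S → ∀ v ∈ V, S.mulVec v ∈ V) (v : Fin 3 → ℝ) (hv : v ∈ V)
    (hv0 : v ≠ 0) (u : Fin 3 → ℝ) : u ∈ V := by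
  have cyc : ∀ a b c : ℝ, ![a, b, c] ∈ V → ![b, c, a] ∈ V := by
    intro a b c h
    have := hS _ isSO3_cyc _ h
    convert this using 1
    ext i; fin_cases i <;> simp [Matrix.mulVec, dotProduct, Fin.sum_univ_three]
  have dia : ∀ a b c : ℝ, ![a, b, c] ∈ V → ![2 * a, 0, 0] ∈ V := by
    intro a b c h
    have := V.add_mem h (hS _ isSO3_diag _ h)
    convert this using 1
    ext i; fin_cases i <;> simp [Matrix.mulVec, dotProduct, Fin.sum_univ_three]; ring
  have hve : v = ![v 0, v 1, v 2] := by
    ext i; fin_cases i <;> simp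
  rw [hve] at hv
  have hex : ∃ a : ℝ, a ≠ 0 ∧ ![a, 0, 0] ∈ V := by
    by_cases h0 : v 0 = 0
    · by_cases h1 : v 1 = 0
      · have h2 : v 2 ≠ 0 := by
          intro h2
          apply hv0
          rw [hve, h0, h1, h2]
          ext i; fin_cases i <;> simp
        exact ⟨2 * v 2, by simpa using h2, dia _ _ _ (cyc _ _ _ (cyc _ _ _ hv))⟩
      · exact ⟨2 * v 1, by simpa using h1, dia _ _ _ (cyc _ _ _ hv)⟩
    · exact ⟨2 * v 0, by simpa using h0, dia _ _ _ hv⟩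
  obtain ⟨a, ha, haV⟩ := hex
  have small : ∀ x : ℝ, x ^ 2 ≤ 1 → ![2 * (x * a), 0, 0] ∈ V := by
    intro x hx
    have hy : x ^ 2 + (Real.sqrt (1 - x ^ 2)) ^ 2 = 1 := by
      rw [Real.sq_sqrt (by linarith)]; ring
    have h := hS _ (isSO3_rot _ _ hy) _ haV
    refine dia (x * a) (Real.sqrt (1 - x ^ 2) * a) 0 ?_
    convert h using 1
    ext i; fin_cases i <;> simp [Matrix.mulVec, dotProduct, Fin.sum_univ_three]
  have all : ∀ c : ℝ, ![c, 0, 0] ∈ V := by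
    intro c
    obtain ⟨n, hn⟩ := exists_nat_gt |c / (2 * a)|
    have hn0 : (0 : ℝ) < n := lt_of_le_of_lt (abs_nonneg _) hn
    have h := V.nsmul_mem (small (c / (2 * a) / n) (by
      rw [sq_le_one_iff_abs_le_one, abs_div, abs_of_pos hn0, div_le_one hn0]
      exact hn.le)) n
    convert h using 1
    ext i; fin_cases i <;> simp
    field_simp
  have := V.add_mem (V.add_mem (all (u 0)) (cyc _ _ _ (cyc _ _ _ (all (u 1)))))
    (cyc _ _ _ (all (u 2)))
  convert this using 1
  ext i; fin_cases i <;> simp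

theorem gal_trans {r : ((Fin 3 → ℝ) × ℝ) → ((Fin 3 → ℝ) × ℝ) → Prop}
    (hi : IsGalileiInvariant r) (p q b : (Fin 3 → ℝ) × ℝ) (h : r p q) :
    r (p + b) (q + b) := by
  have := hi 1 isSO3_one 0 b p q h
  simp at this
  exact this

/-- The class of the origin, as a subgroup. -/
def originGroup (r : ((Fin 3 → ℝ) × ℝ) → ((Fin 3 → ℝ) × ℝ) → Prop)
    (he : Equivalence r) (hi : IsGalileiInvariant r) :
    AddSubgroup ((Fin 3 → ℝ) × ℝ) where
  carrier := {v | r 0 v}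
  zero_mem' := he.refl 0
  add_mem' := by
    intro a b ha hb
    have := gal_trans hi _ _ b ha
    rw [zero_add] at this
    exact he.trans hb this
  neg_mem' := by
    intro a ha
    have := gal_trans hi _ _ (-a) ha
    rw [zero_add, add_neg_cancel] at this
    exact he.symm this

theorem rel_iff {r : ((Fin 3 → ℝ) × ℝ) → ((Fin 3 → ℝ) × ℝ) → Prop}
    (he : Equivalence r) (hi : IsGalileiInvariant r) (p q : (Fin 3 → ℝ) × ℝ) :
    r p q ↔ q - p ∈ originGroup r he hi := by
  constructor
  · intro h
    have := gal_trans hi _ _ (-p) h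
    rw [add_neg_cancel, ← sub_eq_add_neg] at this
    exact this
  · intro h
    have := gal_trans hi _ _ p (show r 0 (q - p) from h)
    simpa using this

theorem origin_act {r : ((Fin 3 → ℝ) × ℝ) → ((Fin 3 → ℝ) × ℝ) → Prop}
    (he : Equivalence r) (hi : IsGalileiInvariant r) (S) (hS : IsSO3 S)
    (w x : Fin 3 → ℝ) (t : ℝ)
    (h : (x, t) ∈ originGroup r he hi) :
    (S.mulVec x + t • w, t) ∈ originGroup r he hi := by
  have := hi S hS w 0 0 (x, t) h
  simp at this
  exact this

theorem origin_space {r : ((Fin 3 → ℝ) × ℝ) → ((Fin 3 → ℝ) × ℝ) → Prop}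
    (he : Equivalence r) (hi : IsGalileiInvariant r) (hn : IsNontrivialRel r)
    (y : Fin 3 → ℝ) : (y, (0 : ℝ)) ∈ originGroup r he hi := by
  have hn2 := hn.2
  push Not at hn2
  obtain ⟨p, q, hpq, hne⟩ := hn2
  rw [rel_iff he hi] at hpq
  have hne' : q - p ≠ 0 := sub_ne_zero.mpr (Ne.symm hne)
  generalize q - p = d at hpq hne'
  obtain ⟨x, t⟩ := d
  by_cases ht : t = 0
  · subst ht
    have hx : x ≠ 0 := by
      rintro rfl; exact hne' rfl
    let V : AddSubgroup (Fin 3 → ℝ) :=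
      (originGroup r he hi).comap (AddMonoidHom.inl (Fin 3 → ℝ) ℝ)
    refine rot_subgroup_top V ?_ x hpq hx y
    intro S hS v hv
    have := origin_act he hi S hS 0 v 0 hv
    simpa [V] using this
  · have h := origin_act he hi 1 isSO3_one (t⁻¹ • y) x t hpq
    have h2 := (originGroup r he hi).sub_mem h hpq
    simpa [smul_smul, ht] using h2

theorem newton_of_time {r : ((Fin 3 → ℝ) × ℝ) → ((Fin 3 → ℝ) × ℝ) → Prop}
    (he : Equivalence r) (hi : IsGalileiInvariant r) (hn : IsNontrivialRel r)
    (htot : ∀ v ∈ originGroup r he hi, v.2 ≠ 0 →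
      ∀ s : ℝ, ∃ z : Fin 3 → ℝ, (z, s) ∈ originGroup r he hi)
    (p q : (Fin 3 → ℝ) × ℝ) : r p q ↔ NewtonSim p q := by
  constructor
  · intro h
    by_contra hne
    apply hn.1
    intro p' q'
    rw [rel_iff he hi] at h ⊢
    obtain ⟨z, hz⟩ := htot _ h (sub_ne_zero.mpr (Ne.symm hne)) (q' - p').2
    have := (originGroup r he hi).add_mem hz
      (origin_space he hi hn ((q' - p').1 - z))
    simp at this
    exact this
  · intro h
    rw [rel_iff he hi]
    have h0 : q - p = ((q - p).1, (0 : ℝ)) := by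
      ext1
      · rfl
      · exact sub_eq_zero.mpr (Eq.symm h)
    rw [h0]
    exact origin_space he hi hn _

theorem gal_of_conf {r : ((Fin 3 → ℝ) × ℝ) → ((Fin 3 → ℝ) × ℝ) → Prop}
    (hc : IsConformalGalileiInvariant r) : IsGalileiInvariant r := by
  intro S hS w b p q h
  have := hc 1 one_pos S hS w b p q h
  simpa using this

/-- Standard Newtonian simultaneity is the only nontrivial Galilei-invariant
equivalence relation on `ℝ³ × ℝ` all of whose equivalence classes are connected,
and also the only nontrivial conformal-Galilei-invariant equivalence relation. -/
theorem newton_simultaneity_unique :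
    (Equivalence NewtonSim ∧ IsGalileiInvariant NewtonSim ∧
      IsNontrivialRel NewtonSim ∧
      (∀ p : (Fin 3 → ℝ) × ℝ, IsConnected {q | NewtonSim p q}) ∧
      IsConformalGalileiInvariant NewtonSim) ∧
    (∀ r : ((Fin 3 → ℝ) × ℝ) → ((Fin 3 → ℝ) × ℝ) → Prop,
      Equivalence r → IsGalileiInvariant r → IsNontrivialRel r →
      (∀ p : (Fin 3 → ℝ) × ℝ, IsConnected {q | r p q}) →
      ∀ p q, r p q ↔ NewtonSim p q) ∧
    (∀ r : ((Fin 3 → ℝ) × ℝ) → ((Fin 3 → ℝ) × ℝ) → Prop,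
      Equivalence r → IsConformalGalileiInvariant r → IsNontrivialRel r →
      ∀ p q, r p q ↔ NewtonSim p q) := by
  refine ⟨⟨⟨fun _ => rfl, fun h => Eq.symm h, fun h k => Eq.trans h k⟩, ?_, ⟨?_, ?_⟩, ?_, ?_⟩,
    ?_, ?_⟩
  · intro S _ w b p q h
    simp only [NewtonSim] at h ⊢
    rw [h]
  · intro h
    have := h (0, 0) (0, 1)
    simp [NewtonSim] at this
  · intro h
    have := congrFun (congrArg Prod.fst (h (0, 0) (fun _ => 1, 0) rfl)) 0
    simp at this
  · intro p
    have h : {q | NewtonSim p q} = (Set.univ : Set (Fin 3 → ℝ)) ×ˢ {p.2} := by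
      ext q
      simp [NewtonSim, eq_comm]
    rw [h]
    exact isConnected_univ.prod isConnected_singleton
  · intro l _ S _ w b p q h
    simp only [NewtonSim] at h ⊢
    rw [h]
  · intro r he hi hn hconn
    refine newton_of_time he hi hn ?_
    intro v hv hv2 s
    have hpre : IsPreconnected (Prod.snd '' {q | r 0 q}) :=
      (hconn 0).isPreconnected.image _ continuous_snd.continuousOn
    have hord := hpre.ordConnected
    have hmem : ∀ n : ℤ, (n : ℝ) * v.2 ∈ Prod.snd '' {q | r 0 q} := by
      intro n
      exact ⟨n • v, (originGroup r he hi).zsmul_mem hv n, by simp⟩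
    have hs : s ∈ Prod.snd '' {q | r 0 q} := by
      have h1 := Int.floor_le (s / v.2)
      have h2 := Int.lt_floor_add_one (s / v.2)
      have hsv : s / v.2 * v.2 = s := div_mul_cancel₀ _ hv2
      have m1 := hmem ⌊s / v.2⌋
      have m2 := hmem (⌊s / v.2⌋ + 1)
      push_cast at m2
      rcases lt_or_gt_of_ne hv2 with hneg | hpos
      · exact hord.out m2 m1 ⟨by nlinarith, by nlinarith⟩
      · exact hord.out m1 m2 ⟨by nlinarith, by nlinarith⟩
    obtain ⟨⟨z, s'⟩, hz, rfl⟩ := hs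
    exact ⟨z, hz⟩
  · intro r he hc hn
    have hi := gal_of_conf hc
    refine newton_of_time he hi hn ?_
    intro v hv hv2 s
    have key : ∀ u ∈ originGroup r he hi, ∀ l : ℝ, 0 < l →
        (l • u.1, l * u.2) ∈ originGroup r he hi := by
      intro u hu l hl
      have := hc l hl 1 isSO3_one 0 0 0 u hu
      simp at this
      exact this
    rcases lt_trichotomy (s / v.2) 0 with h | h | h
    · have := key _ ((originGroup r he hi).neg_mem hv) (-(s / v.2)) (by linarith)
      have h2 : -(s / v.2) * (-v).2 = s := by simp [hv2]
      rw [h2] at this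
      exact ⟨_, this⟩
    · have hs : s = 0 := by
        rcases div_eq_zero_iff.mp h with h | h
        · exact h
        · exact absurd h hv2
      exact ⟨0, hs ▸ (originGroup r he hi).zero_mem⟩
    · have := key _ hv (s / v.2) h
      rw [div_mul_cancel₀ _ hv2] at this
      exact ⟨_, this⟩
end

section
/- Let u ∈ ℝ⁴ be a future timelike vector, p₀ ∈ ℝ⁴, and ℓ = {p₀ + s u : s ∈ ℝ}. Let Ĝ_M be the group of affine bijections f of ℝ⁴ of the form f(x) = μ B x + b with μ > 0, B a Lorentz transformation (not necessarily proper or orthochronous, so in particular time inversion is allowed), and b ∈ ℝ⁴, such that f(ℓ) = ℓ. If ∼ is an equivalence relation on ℝ⁴ that is Ĝ_M-invariant, is not the total relation, and the equivalence class of some point of ℓ is not contained in ℓ, then ∼ equals the standard simultaneity relation R_u: x ∼ y ⟺ g_c(x − y, u) = 0. -/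
noncomputable section

/-- Spacetime `ℝ⁴`, identified with `ℝ³ × ℝ`. -/
abbrev V4 : Type := (Fin 3 → ℝ) × ℝ

/-- The Minkowski form `g_c(x, y) = x̄ ⬝ ȳ - c² x⁴ y⁴`. -/
def mink (c : ℝ) (x y : V4) : ℝ := (∑ i, x.1 i * y.1 i) - c ^ 2 * x.2 * y.2

/-- A vector is future timelike if `g_c(u, u) < 0` and `u⁴ > 0`. -/
def FutureTimelike (c : ℝ) (u : V4) : Prop := mink c u u < 0 ∧ 0 < u.2

/-- A linear map is a Lorentz transformation if it preserves the Minkowski form. -/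
def IsLorentz (c : ℝ) (B : V4 →ₗ[ℝ] V4) : Prop :=
  ∀ x y : V4, mink c (B x) (B y) = mink c x y

/-- The standard simultaneity relation determined by a future timelike vector `u`:
`x R_u y ↔ g_c(x - y, u) = 0`. -/
def Rstd (c : ℝ) (u : V4) (x y : V4) : Prop := mink c (x - y) u = 0

/-- The inertial worldline through `p₀` with direction `u`. -/
def line (p₀ u : V4) : Set V4 := {x : V4 | ∃ s : ℝ, x = p₀ + s • u}

theorem mink_comm' (c : ℝ) (x y : V4) : mink c x y = mink c y x := by
  simp only [mink, Fin.sum_univ_three]; ring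

theorem mink_add_l (c : ℝ) (x y z : V4) : mink c (x + y) z = mink c x z + mink c y z := by
  simp only [mink, Fin.sum_univ_three, Prod.fst_add, Prod.snd_add, Pi.add_apply]; ring

theorem mink_sub_l (c : ℝ) (x y z : V4) : mink c (x - y) z = mink c x z - mink c y z := by
  simp only [mink, Fin.sum_univ_three, Prod.fst_sub, Prod.snd_sub, Pi.sub_apply]; ring

theorem mink_smul_l (c a : ℝ) (x z : V4) : mink c (a • x) z = a * mink c x z := by
  simp only [mink, Fin.sum_univ_three, Prod.smul_fst, Prod.smul_snd, Pi.smul_apply, smul_eq_mul]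
  ring

theorem mink_sub_r (c : ℝ) (x y z : V4) : mink c z (x - y) = mink c z x - mink c z y := by
  rw [mink_comm', mink_sub_l, mink_comm' c x, mink_comm' c y]

theorem mink_smul_r (c a : ℝ) (x z : V4) : mink c z (a • x) = a * mink c z x := by
  rw [mink_comm', mink_smul_l, mink_comm' c x]

/-- The reflection in the hyperplane orthogonal to `v`. -/
def house (c : ℝ) (v : V4) : V4 →ₗ[ℝ] V4 where
  toFun x := x - (2 * mink c x v / mink c v v) • v
  map_add' x y := by
    rw [mink_add_l, mul_add, add_div, add_smul]; abel
  map_smul' a x := by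
    rw [mink_smul_l, RingHom.id_apply, smul_sub, smul_smul]
    congr 2; ring

theorem house_apply (c : ℝ) (v x : V4) :
    house c v x = x - (2 * mink c x v / mink c v v) • v := rfl

theorem house_lorentz (c : ℝ) (v : V4) (hv : mink c v v ≠ 0) : IsLorentz c (house c v) := by
  intro x y
  simp only [house_apply, mink_sub_l, mink_sub_r, mink_smul_l, mink_smul_r, mink_comm' c v y]
  field_simp
  ring

theorem house_fix (c : ℝ) (v x : V4) (h : mink c x v = 0) : house c v x = x := by
  simp [house_apply, h]

theorem house_self (c : ℝ) (v : V4) (hv : mink c v v ≠ 0) : house c v v = -v := by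
  rw [house_apply, mul_div_assoc, div_self hv, mul_one, two_smul]; abel

theorem mink_pos (c : ℝ) (hc : 0 < c) (u : V4) (hu : FutureTimelike c u) (w : V4)
    (h : mink c w u = 0) (hw : w ≠ 0) : 0 < mink c w w := by
  obtain ⟨h1, h2⟩ := hu
  have cs := Finset.sum_mul_sq_le_sq_mul_sq Finset.univ w.1 u.1
  have hWn : 0 ≤ ∑ i, w.1 i ^ 2 := Finset.sum_nonneg fun i _ => sq_nonneg _
  simp only [mink, ← sq] at *
  set W := ∑ i, w.1 i ^ 2 with hW
  set U := ∑ i, u.1 i ^ 2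
  have e1 : (∑ i, w.1 i * u.1 i) = c ^ 2 * w.2 * u.2 := by linarith
  rw [e1] at cs
  have hcu : 0 < c ^ 2 * u.2 ^ 2 := by positivity
  have hWp : 0 < W := by
    rcases hWn.lt_or_eq with h0 | h0
    · exact h0
    · exfalso
      apply hw
      rw [← h0] at cs
      have hz : c ^ 2 * w.2 * u.2 = 0 := by nlinarith
      have hz2 : w.2 = 0 := by
        rcases mul_eq_zero.1 hz with h | h
        · rcases mul_eq_zero.1 h with h | h
          · exact absurd h (by positivity)
          · exact h
        · exact absurd h h2.ne'
      have := (Finset.sum_eq_zero_iff_of_nonneg (fun i _ => sq_nonneg (w.1 i))).1 h0.symm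
      refine Prod.ext (funext fun i => ?_) hz2
      simpa using this i (Finset.mem_univ i)
  have h3 : W * U < W * (c ^ 2 * u.2 ^ 2) := by
    apply mul_lt_mul_of_pos_left _ hWp
    nlinarith
  have h4 : (c ^ 2 * u.2 ^ 2) * (c ^ 2 * w.2 ^ 2) < (c ^ 2 * u.2 ^ 2) * W := by nlinarith
  have h5 := lt_of_mul_lt_mul_left h4 hcu.le
  nlinarith

/-- Malament's theorem (with the Sarkar–Stachel extension): let `Ĝ_M` be the group
of affine bijections `x ↦ μ B x + b` (`μ > 0`, `B` any Lorentz transformation —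
time inversion allowed) preserving the line `ℓ = p₀ + ℝu`.  Any `Ĝ_M`-invariant
equivalence relation which is not total and for which the class of some point of `ℓ`
is not contained in `ℓ` is the standard simultaneity `R_u`. -/
theorem malament_theorem (c : ℝ) (hc : 0 < c) (u : V4) (hu : FutureTimelike c u)
    (p₀ : V4) (r : V4 → V4 → Prop) (hr : Equivalence r)
    (hinv : ∀ μ : ℝ, 0 < μ → ∀ B : V4 →ₗ[ℝ] V4, IsLorentz c B → ∀ b : V4,
      (fun x : V4 => μ • B x + b) '' line p₀ u = line p₀ u →
      ∀ p q : V4, r p q → r (μ • B p + b) (μ • B q + b))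
    (hnot_total : ¬ ∀ p q : V4, r p q)
    (hclass : ∃ p ∈ line p₀ u, ∃ q : V4, r p q ∧ q ∉ line p₀ u) :
    ∀ x y : V4, r x y ↔ Rstd c u x y := by
  have huu : mink c u u ≠ 0 := hu.1.ne
  have key : ∀ μ : ℝ, 0 < μ → ∀ B : V4 →ₗ[ℝ] V4, IsLorentz c B → ∀ ε t : ℝ, ε * ε = 1 →
      B u = ε • u → ∀ x y, r (p₀ + x) (p₀ + y) →
      r (p₀ + (μ • B x + t • u)) (p₀ + (μ • B y + t • u)) := by
    intro μ hμ B hB ε t hε hBu x y hxy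
    have := hinv μ hμ B hB (p₀ - μ • B p₀ + t • u) ?_ _ _ hxy
    · convert this using 1 <;> rw [map_add] <;> module
    · ext z
      simp only [Set.mem_image, line, Set.mem_ofPred_eq]
      constructor
      · rintro ⟨_, ⟨s, rfl⟩, rfl⟩
        refine ⟨μ * s * ε + t, ?_⟩
        rw [map_add, map_smul, hBu]; module
      · rintro ⟨s, rfl⟩
        refine ⟨_, ⟨(s - t) / μ * ε, rfl⟩, ?_⟩
        rw [map_add, map_smul, hBu, smul_smul, mul_assoc, hε, smul_add, smul_smul]
        have : μ * ((s - t) / μ * 1) = s - t := by field_simp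
        rw [this]; module
  have hid : IsLorentz c LinearMap.id := fun _ _ => rfl
  obtain ⟨r', hr'⟩ : ∃ r' : V4 → V4 → Prop, ∀ x y, r' x y ↔ r (p₀ + x) (p₀ + y) :=
    ⟨_, fun _ _ => Iff.rfl⟩
  simp only [← hr'] at key
  have symm : ∀ {x y}, r' x y → r' y x := fun {x y} h => (hr' _ _).2 (hr.symm ((hr' _ _).1 h))
  have trans : ∀ {x y z}, r' x y → r' y z → r' x z := fun {x y z} h k =>
    (hr' _ _).2 (hr.trans ((hr' _ _).1 h) ((hr' _ _).1 k))
  have refl : ∀ x, r' x x := fun x => (hr' _ _).2 (hr.refl _)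
  have htr : ∀ t : ℝ, ∀ x y, r' x y → r' (x + t • u) (y + t • u) := by
    intro t x y h
    simpa using key 1 one_pos _ hid 1 t (by norm_num) (by simp) x y h
  have hsc : ∀ μ : ℝ, 0 < μ → ∀ x y, r' x y → r' (μ • x) (μ • y) := by
    intro μ hμ x y h
    simpa using key μ hμ _ hid 1 0 (by norm_num) (by simp) x y h
  have href : ∀ x y, r' x y → r' (house c u x) (house c u y) := by
    intro x y h
    simpa using key 1 one_pos _ (house_lorentz c u huu) (-1) 0 (by norm_num)
      (by rw [house_self c u huu]; simp) x y h
  have hrot : ∀ v, mink c u v = 0 → mink c v v ≠ 0 → ∀ x y, r' x y →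
      r' (house c v x) (house c v y) := by
    intro v hv hvv x y h
    simpa using key 1 one_pos _ (house_lorentz c v hvv) 1 0 (by norm_num)
      (by rw [house_fix c v u hv]; simp) x y h
  have dec : ∀ x : V4, ∃ w, mink c w u = 0 ∧ x = (mink c x u / mink c u u) • u + w := by
    intro x
    refine ⟨x - (mink c x u / mink c u u) • u, ?_, by abel⟩
    rw [mink_sub_l, mink_smul_l, div_mul_cancel₀ _ huu, sub_self]
  obtain ⟨a, w, hwu, hw, haw⟩ : ∃ a : ℝ, ∃ w, mink c w u = 0 ∧ w ≠ 0 ∧ r' 0 (a • u + w) := by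
    obtain ⟨p, ⟨s, rfl⟩, q, hpq, hq⟩ := hclass
    obtain ⟨w, hwu, hqw⟩ := dec (q - p₀)
    set s1 := mink c (q - p₀) u / mink c u u
    have hq' : q = p₀ + (s1 • u + w) := by rw [← hqw]; abel
    refine ⟨s1 - s, w, hwu, ?_, ?_⟩
    · rintro rfl
      exact hq ⟨s1, by rw [hq', add_zero]⟩
    · rw [hq', ← hr'] at hpq
      have := htr (-s) _ _ hpq
      convert this using 1 <;> module
  have clA : ∀ w', mink c w' u = 0 → ∃ a' : ℝ, (a = 0 → a' = 0) ∧ r' 0 (a' • u + w') := by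
    intro w' hw'
    by_cases h0 : w' = 0
    · exact ⟨0, fun _ => rfl, by simpa [h0] using refl 0⟩
    have p1 := mink_pos c hc u hu w hwu hw
    have p2 := mink_pos c hc u hu w' hw' h0
    obtain ⟨μ, hμ, hμ2⟩ : ∃ μ : ℝ, 0 < μ ∧ μ * (μ * mink c w w) = mink c w' w' := by
      refine ⟨√(mink c w' w' / mink c w w), Real.sqrt_pos.2 (by positivity), ?_⟩
      rw [← mul_assoc, Real.mul_self_sqrt (by positivity), div_mul_cancel₀ _ p1.ne']
    refine ⟨μ * a, fun h => by simp [h], ?_⟩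
    have h1 := hsc μ hμ _ _ haw
    rw [smul_zero, smul_add, smul_smul] at h1
    by_cases hv0 : μ • w - w' = 0
    · rwa [sub_eq_zero.1 hv0] at h1
    have hvu : mink c (μ • w - w') u = 0 := by
      rw [mink_sub_l, mink_smul_l, hwu, hw']; ring
    have hvv := mink_pos c hc u hu _ hvu hv0
    have huv : mink c u (μ • w - w') = 0 := by rw [mink_comm']; exact hvu
    have h2 := hrot _ huv hvv.ne' _ _ h1
    rw [map_zero, map_add, map_smul, house_fix c _ u huv] at h2
    have h3 : house c (μ • w - w') (μ • w) = w' := by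
      rw [house_apply]
      have : 2 * mink c (μ • w) (μ • w - w') = mink c (μ • w - w') (μ • w - w') := by
        simp only [mink_sub_l, mink_sub_r, mink_smul_l, mink_smul_r, mink_comm' c w' w]
        linarith
      rw [this, div_self hvv.ne']; module
    rwa [h3] at h2
  have clB : ∀ s s' : ℝ, s ≠ s' → ¬ r' (s • u) (s' • u) := by
    intro s s' hne h
    apply hnot_total
    have h1 : ∀ d : ℝ, 0 < d → r' 0 (d • u) := by
      have h0 : ∃ e : ℝ, 0 < e ∧ r' 0 (e • u) := by
        rcases lt_or_gt_of_ne hne with hlt | hlt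
        · refine ⟨s' - s, by linarith, ?_⟩
          convert htr (-s) _ _ h using 1 <;> module
        · refine ⟨s - s', by linarith, ?_⟩
          convert htr (-s') _ _ (symm h) using 1 <;> module
      obtain ⟨e, he, h0⟩ := h0
      intro d hd
      have := hsc (d / e) (by positivity) _ _ h0
      rwa [smul_zero, smul_smul, div_mul_cancel₀ _ he.ne'] at this
    have h2 : ∀ d : ℝ, r' 0 (d • u) := by
      intro d
      rcases lt_trichotomy d 0 with hd | hd | hd
      · have := symm (htr d _ _ (h1 (-d) (by linarith)))
        convert this using 1 <;> module
      · simpa [hd] using refl 0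
      · exact h1 d hd
    have h3 : ∀ x, r' 0 x := by
      intro x
      obtain ⟨w1, hw1, hx⟩ := dec x
      obtain ⟨a', -, ha'⟩ := clA w1 hw1
      set s1 := mink c x u / mink c u u
      refine trans (h2 (s1 - a')) ?_
      have := htr (s1 - a') _ _ ha'
      rw [hx]
      convert this using 1 <;> module
    intro p q
    have := trans (symm (h3 (p - p₀))) (h3 (q - p₀))
    rw [hr'] at this
    simpa using this
  have ha : a = 0 := by
    by_contra hne
    have h1 := href _ _ haw
    rw [map_zero, map_add, map_smul, house_self c u huu,
      house_fix c u w hwu] at h1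
    have h2 := htr (2 * a) _ _ h1
    refine clB 0 (2 * a) (by simpa using hne) ?_
    have h3 : a • -u + w + (2 * a) • u = a • u + w := by module
    rw [h3] at h2
    have := trans haw (symm h2)
    simpa using this
  have fin : ∀ x, r' ((mink c x u / mink c u u) • u) x := by
    intro x
    obtain ⟨w1, hw1, hx⟩ := dec x
    obtain ⟨a', h0, ha'⟩ := clA w1 hw1
    rw [h0 ha] at ha'
    set s1 := mink c x u / mink c u u
    have := htr s1 _ _ ha'
    rw [hx]
    convert this using 1 <;> module
  intro x y
  have e : r x y ↔ r' (x - p₀) (y - p₀) := by rw [hr']; simp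
  rw [e, Rstd]
  have hxy : mink c (x - y) u = mink c (x - p₀) u - mink c (y - p₀) u := by
    simp only [mink_sub_l]; ring
  rw [hxy, sub_eq_zero]
  constructor
  · intro h
    by_contra hne
    refine clB _ _ ?_ (trans (fin (x - p₀)) (trans h (symm (fin (y - p₀)))))
    intro h'
    exact hne ((div_left_inj' huu).1 h')
  · intro h
    have := fin (x - p₀)
    rw [h] at this
    exact trans (symm this) (fin (y - p₀))
end
end
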